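/- For every integer n ≥ 2, the matrix 𝔅ₙ satisfies the braided parameter-independent Yang–Baxter equation: (𝔅ₙ ⊗ I₂)(I₂ ⊗ 𝔅ₙ)(𝔅ₙ ⊗ I₂) = (I₂ ⊗ 𝔅ₙ)(𝔅ₙ ⊗ I₂)(I₂ ⊗ 𝔅ₙ) as 8×8 complex matrices. -/

import Mathlib

/-!
In terms of the `2 × 2` matrix `J` with rows `(0, -1)` and `(1, 0)`, the gate factors as
`𝔅ₙ = P (α + β J ⊗ J)`, where `P` is the flip of `ℂ² ⊗ ℂ²`. Moving the flips to the left turns the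
braided equation for `P r` into the quantum Yang–Baxter equation `r₁₂ r₁₃ r₂₃ = r₂₃ r₁₃ r₁₂`. For
`r = α + β J ⊗ J` this holds because the three factors are polynomials in the commuting operators
`J ⊗ 1 ⊗ 1`, `1 ⊗ J ⊗ 1` and `1 ⊗ 1 ⊗ J`.
-/

open Matrix Complex
open scoped Kronecker

/-- The gate 𝔅ₙ obtained from the cyclic group of order n. -/
noncomputable def Bn (n : ℕ) : Matrix (Fin 4) (Fin 4) ℂ :=
  let α : ℂ := (Real.cos (2 * Real.pi / n) : ℂ)
  let β : ℂ := -Complex.I * (Real.sin (2 * Real.pi / n) : ℂ)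
  !![α, 0, 0, β; 0, -β, α, 0; 0, α, -β, 0; β, 0, 0, α]

/-- R ⊗ I₂ as an 8×8 matrix. -/
noncomputable def RI (R : Matrix (Fin 4) (Fin 4) ℂ) : Matrix (Fin 8) (Fin 8) ℂ :=
  Matrix.reindex finProdFinEquiv finProdFinEquiv (R ⊗ₖ (1 : Matrix (Fin 2) (Fin 2) ℂ))

/-- I₂ ⊗ R as an 8×8 matrix. -/
noncomputable def IR (R : Matrix (Fin 4) (Fin 4) ℂ) : Matrix (Fin 8) (Fin 8) ℂ :=
  Matrix.reindex finProdFinEquiv finProdFinEquiv ((1 : Matrix (Fin 2) (Fin 2) ℂ) ⊗ₖ R)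

theorem braid_relation_of_quantum_yang_baxter {S : Type*} [Semigroup S] {p₁ p₂ r₁₂ r₁₃ r₂₃ : S}
    (hp : p₁ * p₂ * p₁ = p₂ * p₁ * p₂)
    (h₁ : SemiconjBy p₁ r₁₃ r₂₃) (h₁' : SemiconjBy p₁ r₂₃ r₁₃)
    (h₂ : SemiconjBy p₂ r₁₂ r₁₃) (h₂' : SemiconjBy p₂ r₁₃ r₁₂)
    (hr : r₁₂ * r₁₃ * r₂₃ = r₂₃ * r₁₃ * r₁₂) :
    (p₁ * r₁₂) * (p₂ * r₂₃) * (p₁ * r₁₂) = (p₂ * r₂₃) * (p₁ * r₁₂) * (p₂ * r₂₃) :=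
  calc (p₁ * r₁₂) * (p₂ * r₂₃) * (p₁ * r₁₂)
    _ = p₁ * (r₁₂ * p₂) * (r₂₃ * p₁) * r₁₂ := by simp only [mul_assoc]
    _ = p₁ * (p₂ * r₁₃) * (p₁ * r₁₃) * r₁₂ := by rw [h₂'.eq, h₁.eq]
    _ = p₁ * p₂ * (r₁₃ * p₁) * r₁₃ * r₁₂ := by simp only [mul_assoc]
    _ = p₁ * p₂ * (p₁ * r₂₃) * r₁₃ * r₁₂ := by rw [h₁'.eq]
    _ = (p₁ * p₂ * p₁) * (r₂₃ * r₁₃ * r₁₂) := by simp only [mul_assoc]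
    _ = (p₂ * p₁ * p₂) * (r₁₂ * r₁₃ * r₂₃) := by rw [hp, hr]
    _ = p₂ * p₁ * (p₂ * r₁₂) * r₁₃ * r₂₃ := by simp only [mul_assoc]
    _ = p₂ * p₁ * (r₁₃ * p₂) * r₁₃ * r₂₃ := by rw [h₂.eq]
    _ = p₂ * (p₁ * r₁₃) * (p₂ * r₁₃) * r₂₃ := by simp only [mul_assoc]
    _ = p₂ * (r₂₃ * p₁) * (r₁₂ * p₂) * r₂₃ := by rw [h₁.eq, h₂'.eq]
    _ = (p₂ * r₂₃) * (p₁ * r₁₂) * (p₂ * r₂₃) := by simp only [mul_assoc]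

theorem permMatrix_semiconjBy_submatrix {ι K : Type*} [Fintype ι] [DecidableEq ι]
    [NonAssocSemiring K] (σ : Equiv.Perm ι) (M : Matrix ι ι K) :
    SemiconjBy (σ.permMatrix K) M (M.submatrix σ σ) := by
  rw [SemiconjBy, PEquiv.toMatrix_toPEquiv_mul, PEquiv.mul_toMatrix_toPEquiv, submatrix_submatrix,
    Function.comp_id, Equiv.self_comp_symm]

section TripleProduct

/-- The permutation `(i, j, k) ↦ (j, i, k)` of a threefold product. -/
def swap₁₂ (ι : Type*) : Equiv.Perm (ι × ι × ι) :=
  (Equiv.prodAssoc ι ι ι).permCongr ((Equiv.prodComm ι ι).prodCongr (Equiv.refl ι))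

/-- The permutation `(i, j, k) ↦ (i, k, j)` of a threefold product. -/
def swap₂₃ (ι : Type*) : Equiv.Perm (ι × ι × ι) :=
  (Equiv.refl ι).prodCongr (Equiv.prodComm ι ι)

theorem swap_braid (ι : Type*) :
    ((swap₁₂ ι).trans (swap₂₃ ι)).trans (swap₁₂ ι) =
      ((swap₂₃ ι).trans (swap₁₂ ι)).trans (swap₂₃ ι) := rfl

variable {ι K : Type*} [DecidableEq ι] [CommSemiring K]

/-- The operator `R ⊗ 1` on `V ⊗ V ⊗ V`, for `R` acting on `V ⊗ V`. -/
def leg₁₂ (R : Matrix (ι × ι) (ι × ι) K) : Matrix (ι × ι × ι) (ι × ι × ι) K :=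
  reindex (Equiv.prodAssoc ι ι ι) (Equiv.prodAssoc ι ι ι) (R ⊗ₖ (1 : Matrix ι ι K))

/-- The operator `1 ⊗ R` on `V ⊗ V ⊗ V`, for `R` acting on `V ⊗ V`. -/
def leg₂₃ (R : Matrix (ι × ι) (ι × ι) K) : Matrix (ι × ι × ι) (ι × ι × ι) K :=
  (1 : Matrix ι ι K) ⊗ₖ R

/-- The operator on `V ⊗ V ⊗ V` that acts as `R` on the outer two factors. -/
def leg₁₃ (R : Matrix (ι × ι) (ι × ι) K) : Matrix (ι × ι × ι) (ι × ι × ι) K :=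
  (leg₁₂ R).submatrix (swap₂₃ ι) (swap₂₃ ι)

variable (ι K) in
/-- The matrix of the flip `v ⊗ w ↦ w ⊗ v` of `V ⊗ V`. -/
def flipMatrix : Matrix (ι × ι) (ι × ι) K :=
  Equiv.Perm.permMatrix K (Equiv.prodComm ι ι)

theorem leg₁₃_submatrix_swap₂₃ (R : Matrix (ι × ι) (ι × ι) K) :
    (leg₁₃ R).submatrix (swap₂₃ ι) (swap₂₃ ι) = leg₁₂ R := rfl

theorem leg₂₃_submatrix_swap₁₂ (R : Matrix (ι × ι) (ι × ι) K) :
    (leg₂₃ R).submatrix (swap₁₂ ι) (swap₁₂ ι) = leg₁₃ R := by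
  ext i j
  exact mul_comm _ _

theorem leg₁₃_submatrix_swap₁₂ (R : Matrix (ι × ι) (ι × ι) K) :
    (leg₁₃ R).submatrix (swap₁₂ ι) (swap₁₂ ι) = leg₂₃ R := by
  rw [← leg₂₃_submatrix_swap₁₂]
  rfl

theorem leg₁₂_flipMatrix : leg₁₂ (flipMatrix ι K) = (swap₁₂ ι).permMatrix K := by
  ext ⟨i, j, k⟩ ⟨i', j', k'⟩
  simp [leg₁₂, flipMatrix, swap₁₂, PEquiv.toMatrix_apply, one_apply, ← ite_and, and_comm,
    and_left_comm, and_assoc]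

theorem leg₂₃_flipMatrix : leg₂₃ (flipMatrix ι K) = (swap₂₃ ι).permMatrix K := by
  ext ⟨i, j, k⟩ ⟨i', j', k'⟩
  simp [leg₂₃, flipMatrix, swap₂₃, PEquiv.toMatrix_apply, one_apply, ← ite_and, and_comm]

theorem leg₁₂_smul_one_add_smul_kronecker (a b : K) (A B : Matrix ι ι K) :
    leg₁₂ (a • 1 + b • (A ⊗ₖ B)) = a • 1 + b • (A ⊗ₖ (B ⊗ₖ 1)) := by
  simp only [leg₁₂, add_kronecker, smul_kronecker, one_kronecker_one, reindex_apply,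
    submatrix_add, submatrix_smul, Pi.add_apply, Pi.smul_apply, submatrix_one_equiv,
    ← kronecker_assoc]

theorem leg₂₃_smul_one_add_smul_kronecker (a b : K) (A B : Matrix ι ι K) :
    leg₂₃ (a • 1 + b • (A ⊗ₖ B)) = a • 1 + b • (1 ⊗ₖ (A ⊗ₖ B)) := by
  simp only [leg₂₃, kronecker_add, kronecker_smul, one_kronecker_one]

theorem leg₁₃_smul_one_add_smul_kronecker (a b : K) (A B : Matrix ι ι K) :
    leg₁₃ (a • 1 + b • (A ⊗ₖ B)) = a • 1 + b • (A ⊗ₖ (1 ⊗ₖ B)) := by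
  have swap_factors : (A ⊗ₖ (B ⊗ₖ (1 : Matrix ι ι K))).submatrix (swap₂₃ ι) (swap₂₃ ι) =
      A ⊗ₖ (1 ⊗ₖ B) := by
    ext i j
    exact congrArg (A i.1 j.1 * ·) (mul_comm _ _)
  simp only [leg₁₃, leg₁₂_smul_one_add_smul_kronecker, submatrix_add, submatrix_smul,
    Pi.add_apply, Pi.smul_apply, submatrix_one_equiv, swap_factors]

variable [Fintype ι]

theorem leg₁₂_mul (R S : Matrix (ι × ι) (ι × ι) K) : leg₁₂ (R * S) = leg₁₂ R * leg₁₂ S := by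
  simp only [leg₁₂, reindex_apply, submatrix_mul_equiv, ← mul_kronecker_mul, mul_one]

theorem leg₂₃_mul (R S : Matrix (ι × ι) (ι × ι) K) : leg₂₃ (R * S) = leg₂₃ R * leg₂₃ S := by
  simp only [leg₂₃, ← mul_kronecker_mul, mul_one]

theorem permMatrix_swap_braid :
    (swap₁₂ ι).permMatrix K * (swap₂₃ ι).permMatrix K * (swap₁₂ ι).permMatrix K =
      (swap₂₃ ι).permMatrix K * (swap₁₂ ι).permMatrix K * (swap₂₃ ι).permMatrix K := by
  simp only [← PEquiv.toMatrix_trans, ← Equiv.toPEquiv_trans, swap_braid]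

/-- The braided Yang–Baxter equation for an operator on `V ⊗ V`. -/
def IsBraidedYangBaxter (R : Matrix (ι × ι) (ι × ι) K) : Prop :=
  leg₁₂ R * leg₂₃ R * leg₁₂ R = leg₂₃ R * leg₁₂ R * leg₂₃ R

/-- The quantum Yang–Baxter equation for an operator on `V ⊗ V`. -/
def IsQuantumYangBaxter (R : Matrix (ι × ι) (ι × ι) K) : Prop :=
  leg₁₂ R * leg₁₃ R * leg₂₃ R = leg₂₃ R * leg₁₃ R * leg₁₂ R

theorem IsQuantumYangBaxter.isBraidedYangBaxter {R : Matrix (ι × ι) (ι × ι) K}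
    (hR : IsQuantumYangBaxter R) :
    IsBraidedYangBaxter (flipMatrix ι K * R) := by
  simp only [IsBraidedYangBaxter, leg₁₂_mul, leg₂₃_mul, leg₁₂_flipMatrix, leg₂₃_flipMatrix]
  refine braid_relation_of_quantum_yang_baxter permMatrix_swap_braid ?_ ?_ ?_ ?_ hR
  · exact leg₁₃_submatrix_swap₁₂ R ▸ permMatrix_semiconjBy_submatrix (swap₁₂ ι) (leg₁₃ R)
  · exact leg₂₃_submatrix_swap₁₂ R ▸ permMatrix_semiconjBy_submatrix (swap₁₂ ι) (leg₂₃ R)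
  · exact permMatrix_semiconjBy_submatrix (swap₂₃ ι) (leg₁₂ R)
  · exact leg₁₃_submatrix_swap₂₃ R ▸ permMatrix_semiconjBy_submatrix (swap₂₃ ι) (leg₁₃ R)

theorem isQuantumYangBaxter_smul_one_add_smul_kronecker (a b : K) {A B : Matrix ι ι K}
    (hAB : Commute A B) :
    IsQuantumYangBaxter (a • (1 : Matrix (ι × ι) (ι × ι) K) + b • (A ⊗ₖ B)) := by
  have commute_affine {X Y : Matrix (ι × ι × ι) (ι × ι × ι) K} (h : Commute X Y) :
      Commute (a • 1 + b • X) (a • 1 + b • Y) :=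
    .add_left (.smul_left (.one_left _) _)
      (.add_right (.smul_right (.one_right _) _) ((h.smul_left _).smul_right _))
  have comm₁₂₁₃ : Commute (A ⊗ₖ (B ⊗ₖ (1 : Matrix ι ι K))) (A ⊗ₖ ((1 : Matrix ι ι K) ⊗ₖ B)) := by
    simp only [Commute, SemiconjBy, ← mul_kronecker_mul, one_mul, mul_one]
  have comm₁₂₂₃ : Commute (A ⊗ₖ (B ⊗ₖ (1 : Matrix ι ι K))) ((1 : Matrix ι ι K) ⊗ₖ (A ⊗ₖ B)) := by
    simp only [Commute, SemiconjBy, ← mul_kronecker_mul, one_mul, mul_one, hAB.eq]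
  have comm₁₃₂₃ : Commute (A ⊗ₖ ((1 : Matrix ι ι K) ⊗ₖ B)) ((1 : Matrix ι ι K) ⊗ₖ (A ⊗ₖ B)) := by
    simp only [Commute, SemiconjBy, ← mul_kronecker_mul, one_mul, mul_one]
  rw [IsQuantumYangBaxter, leg₁₂_smul_one_add_smul_kronecker, leg₁₃_smul_one_add_smul_kronecker,
    leg₂₃_smul_one_add_smul_kronecker, (commute_affine comm₁₂₁₃).eq, mul_assoc,
    (commute_affine comm₁₂₂₃).eq, ← mul_assoc, (commute_affine comm₁₃₂₃).eq]

end TripleProduct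

section FinIndices

theorem finProdFinEquiv_assoc {l m n : ℕ} (i : Fin l) (j : Fin m) (k : Fin n) :
    (finProdFinEquiv (finProdFinEquiv (i, j), k) : ℕ) =
      finProdFinEquiv (i, finProdFinEquiv (j, k)) := by
  simp only [finProdFinEquiv_apply_val]
  ring

/-- The lexicographic enumeration of the basis of `ℂ² ⊗ ℂ² ⊗ ℂ²`. -/
def finTripleEquiv : Fin 2 × Fin 2 × Fin 2 ≃ Fin 8 :=
  ((Equiv.refl (Fin 2)).prodCongr finProdFinEquiv).trans finProdFinEquiv

theorem IR_reindex (R : Matrix (Fin 2 × Fin 2) (Fin 2 × Fin 2) ℂ) :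
    IR (reindex finProdFinEquiv finProdFinEquiv R) =
      reindex finTripleEquiv finTripleEquiv (leg₂₃ R) := by
  rfl

theorem RI_reindex (R : Matrix (Fin 2 × Fin 2) (Fin 2 × Fin 2) ℂ) :
    RI (reindex finProdFinEquiv finProdFinEquiv R) =
      reindex finTripleEquiv finTripleEquiv (leg₁₂ R) := by
  have regroup : (finProdFinEquiv.prodCongr (Equiv.refl (Fin 2))).trans finProdFinEquiv =
      (Equiv.prodAssoc (Fin 2) (Fin 2) (Fin 2)).trans finTripleEquiv :=
    Equiv.ext fun ⟨⟨i, j⟩, k⟩ ↦ Fin.ext (finProdFinEquiv_assoc i j k)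
  calc RI (reindex finProdFinEquiv finProdFinEquiv R)
    _ = reindex ((finProdFinEquiv.prodCongr (Equiv.refl (Fin 2))).trans finProdFinEquiv)
          ((finProdFinEquiv.prodCongr (Equiv.refl (Fin 2))).trans finProdFinEquiv)
          (R ⊗ₖ (1 : Matrix (Fin 2) (Fin 2) ℂ)) := rfl
    _ = reindex finTripleEquiv finTripleEquiv (leg₁₂ R) := by rw [regroup]; rfl

theorem IsBraidedYangBaxter.RI_mul_IR_mul_RI {R : Matrix (Fin 2 × Fin 2) (Fin 2 × Fin 2) ℂ}
    (hR : IsBraidedYangBaxter R) :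
    RI (reindex finProdFinEquiv finProdFinEquiv R) *
        IR (reindex finProdFinEquiv finProdFinEquiv R) *
        RI (reindex finProdFinEquiv finProdFinEquiv R) =
      IR (reindex finProdFinEquiv finProdFinEquiv R) *
        RI (reindex finProdFinEquiv finProdFinEquiv R) *
        IR (reindex finProdFinEquiv finProdFinEquiv R) := by
  rw [RI_reindex, IR_reindex]
  simp only [reindex_apply, submatrix_mul_equiv]
  rw [hR]

end FinIndices

/-- The gate `𝔅ₙ` with arbitrary parameters `a`, `b` in place of `α`, `β`. -/
def cyclicGate (a b : ℂ) : Matrix (Fin 4) (Fin 4) ℂ :=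
  !![a, 0, 0, b; 0, -b, a, 0; 0, a, -b, 0; b, 0, 0, a]

theorem cyclicGate_eq_reindex_flipMatrix_mul (a b : ℂ) :
    cyclicGate a b = reindex finProdFinEquiv finProdFinEquiv
      (flipMatrix (Fin 2) ℂ * (a • 1 + b • (!![0, -1; 1, 0] ⊗ₖ !![0, -1; 1, 0]))) := by
  rw [flipMatrix, PEquiv.toMatrix_toPEquiv_mul]
  ext i j
  fin_cases i <;> fin_cases j <;>
    simp [cyclicGate, finProdFinEquiv, Fin.divNat, Fin.modNat]

theorem Bn_yang_baxter_general (a b : ℂ) :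
    RI (cyclicGate a b) * IR (cyclicGate a b) * RI (cyclicGate a b) =
      IR (cyclicGate a b) * RI (cyclicGate a b) * IR (cyclicGate a b) := by
  rw [cyclicGate_eq_reindex_flipMatrix_mul]
  exact (isQuantumYangBaxter_smul_one_add_smul_kronecker a b
    (Commute.refl _)).isBraidedYangBaxter.RI_mul_IR_mul_RI

/-- 𝔅ₙ satisfies the braided parameter-independent Yang–Baxter equation. -/
theorem Bn_yang_baxter (n : ℕ) (hn : 2 ≤ n) :
    RI (Bn n) * IR (Bn n) * RI (Bn n) = IR (Bn n) * RI (Bn n) * IR (Bn n) :=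
  Bn_yang_baxter_general _ _
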